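/- Let u : ℝ^{2C}_{++} → ℝ be continuous and lower unbounded, and let U(x₀,…,x_S) = Σ_{s=1}^S a_s u(x₀,x_s) with a_s ∈ (0,1), Σ a_s = 1. If every upper level set of U in ℝ^{C(S+1)}_{++} is closed in ℝ^{C(S+1)}, then every upper level set of u in ℝ^{2C}_{++} is closed in ℝ^{2C}. -/

import Mathlib

/-- If u : ℝ^{2C}_{++} → ℝ is continuous, lower unbounded, and all
upper level sets of the expected utility U(x₀,…,x_S) = ∑ₛ aₛ u(x₀,x_s) are closed
in ℝ^{C(S+1)}, then all upper level sets of u are closed in ℝ^{2C}. -/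
theorem stmt10 (C S : ℕ) (hC : 1 ≤ C) (hS : 1 ≤ S)
    (a : Fin S → ℝ) (ha : ∀ s, a s ∈ Set.Ioo (0:ℝ) 1) (hsum : ∑ s, a s = 1)
    (u : ((Fin C → ℝ) × (Fin C → ℝ)) → ℝ)
    (P2 : Set ((Fin C → ℝ) × (Fin C → ℝ)))
    (hP2 : P2 = {p | (∀ i, 0 < p.1 i) ∧ (∀ i, 0 < p.2 i)})
    (PG : Set (Fin (S+1) → (Fin C → ℝ)))
    (hPG : PG = {x | ∀ k i, 0 < x k i})
    (hcont : ContinuousOn u P2)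
    (hlb : ∀ r : ℝ, ∃ p ∈ P2, u p < r)
    (hclosedU : ∀ xb ∈ PG, IsClosed {x | x ∈ PG ∧
      (∑ s : Fin S, a s * u (xb 0, xb s.succ)) ≤ ∑ s : Fin S, a s * u (x 0, x s.succ)}) :
    ∀ zb ∈ P2, IsClosed {z | z ∈ P2 ∧ u zb ≤ u z} := by
  intro zb hzb
  subst hP2 hPG
  let f : ((Fin C → ℝ) × (Fin C → ℝ)) → (Fin (S+1) → (Fin C → ℝ)) :=
    fun z => Fin.cons z.1 (fun _ => z.2)
  have hf0 : ∀ z, f z 0 = z.1 := fun z => rfl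
  have hfs : ∀ z (s : Fin S), f z s.succ = z.2 := fun z s => rfl
  have hf : Continuous f := by
    refine continuous_pi fun k => ?_
    refine Fin.cases ?_ (fun s => ?_) k
    · simpa only [hf0] using continuous_fst
    · simpa only [hfs] using continuous_snd
  have hU : ∀ z, ∑ s : Fin S, a s * u (f z 0, f z s.succ) = u z := by
    intro z
    simp only [hf0, hfs]
    rw [← Finset.sum_mul, hsum, one_mul]
  have hmem : ∀ z, (∀ k i, 0 < f z k i) ↔ ((∀ i, 0 < z.1 i) ∧ (∀ i, 0 < z.2 i)) := by
    intro z
    rw [Fin.forall_fin_succ]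
    simp only [hf0, hfs]
    have : Nonempty (Fin S) := ⟨⟨0, hS⟩⟩
    rw [forall_const]
  have h := (hclosedU (f zb) ((hmem zb).2 hzb)).preimage hf
  convert h using 1
  ext z
  simp only [Set.mem_setOf_eq, Set.mem_preimage, hU, hmem]
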